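/- arXiv:1810.12475 — 2 statements merged into one kernel-verified Lean document; each statement's English description precedes it below -/
import Mathlib

section
/- For every integer w and all nonnegative integers u, ℓ that are not both zero, T(w,u,ℓ) = 0. -/
open Finset

noncomputable section

/-- The field `ℚ(q)` of rational functions over `ℚ`. -/
abbrev F : Type := RatFunc ℚ

/-- The indeterminate `q`. -/
noncomputable def qq : F := RatFunc.X

/-- The quantum integer `[n]` with base `v`: `(v^n - v^(-n))/(v - v⁻¹)`. -/
noncomputable def qint (v : F) (n : ℤ) : F := (v ^ n - v ^ (-n)) / (v - v⁻¹)

/-- The quantum factorial `[m]! = [1][2]⋯[m]` with base `v`. -/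
noncomputable def qfact (v : F) (m : ℕ) : F := ∏ k ∈ range m, qint v ((k : ℤ) + 1)

/-- The quantum binomial coefficient `C_v(n,d) = [n][n-1]⋯[n-d+1]/[d]!` for `d ≥ 0`,
and `0` for `d < 0`. -/
noncomputable def qbinom (v : F) (n d : ℤ) : F :=
  if d < 0 then 0
  else (∏ k ∈ range d.toNat, qint v (n - (k : ℤ))) / qfact v d.toNat

/-- The function `T(w,u,ℓ)` of [CLW, (3.14)]. -/
noncomputable def T (w : ℤ) (u ℓ : ℕ) : F :=
  (∑ c ∈ range (u + 1), ∑ e ∈ range (u + 1 - c), ∑ t ∈ range (ℓ + 1),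
      (let r : ℕ := u - c - e;
       if Even ((t : ℤ) + w - (r : ℤ)) then
         qq ^ (-(t : ℤ) * ((ℓ : ℤ) + (u : ℤ) - 1) + ((ℓ : ℤ) + (u : ℤ)) * ((c : ℤ) - (e : ℤ)))
           * qbinom qq (ℓ : ℤ) (t : ℤ) * qbinom qq (w + (t : ℤ) - (ℓ : ℤ)) (r : ℤ)
           * qbinom (qq ^ 2) ((u : ℤ) - 1 + (w + (t : ℤ) - (r : ℤ)) / 2) (c : ℤ)
           * qbinom (qq ^ 2) ((w + (t : ℤ) - (r : ℤ)) / 2 - (ℓ : ℤ)) (e : ℤ)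
       else 0))
  - (∑ c ∈ range (u + 1), ∑ e ∈ range (u + 1 - c), ∑ t ∈ range (ℓ + 1),
      (let r : ℕ := u - c - e;
       if ¬ Even ((t : ℤ) + w - (r : ℤ)) then
         qq ^ (-(t : ℤ) * ((ℓ : ℤ) + (u : ℤ) - 1) + ((ℓ : ℤ) + (u : ℤ) - 1) * ((c : ℤ) - (e : ℤ)))
           * qbinom qq (ℓ : ℤ) (t : ℤ) * qbinom qq (w + (t : ℤ) - (ℓ : ℤ)) (r : ℤ)
           * qbinom (qq ^ 2) ((u : ℤ) + (w + (t : ℤ) - (r : ℤ) - 1) / 2) (c : ℤ)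
           * qbinom (qq ^ 2) ((w + (t : ℤ) - (r : ℤ) - 1) / 2 - (ℓ : ℤ)) (e : ℤ)
       else 0))

/-!
Put `p = v⁻²` and let `(-X; p)_∞ = ∏ i ≥ 0, (1 + p^i X)`. By the `q`-binomial theorem the
generating series of the `v`-binomial coefficients `[m, k]` is
`(-v^(m-1) X; p)_∞ / (-v^(-m-1) X; p)_∞`.
The two `v²`-binomial coefficients in `T` thus contribute two denominators with base `p²`, and these
are the even and the odd half of a single denominator with base `p`. Which half comes from which
coefficient depends on the parity of `n = w + t - r`, so both parities give the same coefficient of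
one series, in which `n` enters only by rescaling the numerator by `v^n` and the denominator by
`v^(-n)`.

Expand the numerator, the denominator and the two halves of `[w + t - ℓ, r]`, with indices `i`, `j`,
`k`, `m`, and group them by `I = i + k` and `J = j + m` instead of `i + j` and `r = k + m`. The sum
then separates for fixed `(I, J)` into a sum over `t`, a coefficient of `X^I` and a coefficient of
`X^J`. The last vanishes for `J > 0`, being the coefficient of `X^J` in a polynomial of degree
`J - 1`. For `J = 0` the sum over `t` vanishes if `ℓ > 0`, and if `ℓ = 0` the coefficient of `X^I`
does, by the same degree argument with base `p²`.
-/

open PowerSeries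

section AntidiagonalSums

variable {M : Type*} [AddCommMonoid M]

lemma sum_antidiagonal_antidiagonal_comm {A : Type*} [AddCommMonoid A] [HasAntidiagonal A]
    (n : A) (f : A → A → A → A → M) :
    ∑ z ∈ antidiagonal n, ∑ x ∈ antidiagonal z.1, ∑ y ∈ antidiagonal z.2, f x.1 x.2 y.1 y.2 =
      ∑ z ∈ antidiagonal n, ∑ x ∈ antidiagonal z.1, ∑ y ∈ antidiagonal z.2,
        f x.1 y.1 x.2 y.2 := by
  simp only [← sum_product', sum_sigma']
  let transpose : (_ : A × A) × (A × A) × (A × A) → (_ : A × A) × (A × A) × (A × A) :=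
    fun a => ⟨(a.2.1.1 + a.2.2.1, a.2.1.2 + a.2.2.2), (a.2.1.1, a.2.2.1), (a.2.1.2, a.2.2.2)⟩
  refine sum_nbij' transpose transpose ?_ ?_ ?_ ?_ fun _ _ => rfl
  all_goals
    rintro ⟨⟨s, r⟩, ⟨i, j⟩, ⟨k, m⟩⟩ h
    simp only [mem_sigma, mem_product, HasAntidiagonal.mem_antidiagonal] at h
    obtain ⟨rfl, rfl, rfl⟩ := h
    simp [transpose, add_add_add_comm]

lemma sum_range_sum_range_eq_sum_antidiagonal (n : ℕ) (f : ℕ → ℕ → ℕ → M) :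
    ∑ c ∈ range (n + 1), ∑ e ∈ range (n + 1 - c), f c e (n - c - e) =
      ∑ z ∈ antidiagonal n, ∑ x ∈ antidiagonal z.1, f x.1 x.2 z.2 := by
  simp only [sum_sigma']
  refine sum_nbij' (fun a => ⟨(a.1 + a.2, n - a.1 - a.2), (a.1, a.2)⟩)
    (fun a => ⟨a.2.1, a.2.2⟩) ?_ ?_ (fun _ _ => rfl) ?_ fun _ _ => rfl
  · rintro ⟨c, e⟩ h
    simp only [mem_sigma, mem_range, HasAntidiagonal.mem_antidiagonal, and_true] at h ⊢
    omega
  · rintro ⟨⟨s, r⟩, ⟨c, e⟩⟩ h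
    simp only [mem_sigma, mem_range, HasAntidiagonal.mem_antidiagonal] at h ⊢
    omega
  · rintro ⟨⟨s, r⟩, ⟨c, e⟩⟩ h
    simp only [mem_sigma, HasAntidiagonal.mem_antidiagonal] at h
    obtain ⟨rfl, rfl⟩ := h
    simp only [Nat.sub_sub, Nat.add_sub_cancel_left]

end AntidiagonalSums

variable {K : Type*} [Field K]

section EulerProduct

variable {p : K}

/-- The finite `q`-Pochhammer symbol `(p; p)_k = (1 - p)(1 - p²)⋯(1 - p^k)`. -/
def qPochhammer (p : K) (k : ℕ) : K := ∏ i ∈ range k, (1 - p ^ (i + 1))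

/-- The infinite product `(-X; p)_∞ = ∏ i ≥ 0, (1 + p^i X)`, encoded through Euler's expansion
so that no convergence is involved. -/
def qProd (p : K) : K⟦X⟧ := mk fun k => p ^ k.choose 2 / qPochhammer p k

/-- The inverse `1 / (-X; p)_∞` of `qProd`, again through Euler's expansion. -/
def qProdInv (p : K) : K⟦X⟧ := mk fun k => (-1) ^ k / qPochhammer p k

lemma one_sub_pow_succ_ne_zero (hp : ¬IsOfFinOrder p) (k : ℕ) : 1 - p ^ (k + 1) ≠ 0 :=
  sub_ne_zero.2 fun h => hp <| isOfFinOrder_iff_pow_eq_one.2 ⟨k + 1, k.succ_pos, h.symm⟩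

lemma qPochhammer_ne_zero (hp : ¬IsOfFinOrder p) (k : ℕ) : qPochhammer p k ≠ 0 :=
  prod_ne_zero_iff.2 fun i _ => one_sub_pow_succ_ne_zero hp i

lemma qPochhammer_succ (p : K) (k : ℕ) :
    qPochhammer p (k + 1) = qPochhammer p k * (1 - p ^ (k + 1)) :=
  prod_range_succ _ k

lemma constantCoeff_qProd (p : K) : constantCoeff (qProd p) = 1 := by
  simp [qProd, qPochhammer, ← coeff_zero_eq_constantCoeff_apply]

lemma constantCoeff_qProdInv (p : K) : constantCoeff (qProdInv p) = 1 := by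
  simp [qProdInv, qPochhammer, ← coeff_zero_eq_constantCoeff_apply]

lemma constantCoeff_rescale (a : K) (f : K⟦X⟧) :
    constantCoeff (rescale a f) = constantCoeff f := by
  rw [← coeff_zero_eq_constantCoeff_apply, coeff_rescale, pow_zero, one_mul,
    coeff_zero_eq_constantCoeff_apply]

lemma qProd_eq_mul_rescale (hp : ¬IsOfFinOrder p) :
    qProd p = (1 + X) * rescale p (qProd p) := by
  ext n
  rw [add_mul, one_mul, map_add, coeff_rescale]
  cases n with
  | zero => simp
  | succ k =>
    rw [coeff_succ_X_mul, coeff_rescale]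
    simp only [qProd, coeff_mk, qPochhammer_succ, Nat.choose_succ_succ' k 1, Nat.choose_one_right]
    have := qPochhammer_ne_zero hp k
    have := one_sub_pow_succ_ne_zero hp k
    field_simp
    ring

lemma rescale_qProdInv (hp : ¬IsOfFinOrder p) :
    rescale p (qProdInv p) = (1 + X) * qProdInv p := by
  ext n
  rw [add_mul, one_mul, map_add, coeff_rescale]
  cases n with
  | zero => simp
  | succ k =>
    rw [coeff_succ_X_mul]
    simp only [qProdInv, coeff_mk, qPochhammer_succ]
    have := qPochhammer_ne_zero hp k
    have := one_sub_pow_succ_ne_zero hp k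
    field_simp
    ring

lemma eq_one_of_rescale_eq_self (hp : ¬IsOfFinOrder p) {f : K⟦X⟧} (hf : rescale p f = f)
    (hf₀ : constantCoeff f = 1) : f = 1 := by
  ext n
  cases n with
  | zero => simpa using hf₀
  | succ k =>
    have h : p ^ (k + 1) * coeff (k + 1) f = coeff (k + 1) f := by
      rw [← coeff_rescale, hf]
    have h' : (1 - p ^ (k + 1)) * coeff (k + 1) f = 0 := by linear_combination -h
    simpa [coeff_one] using (mul_eq_zero.1 h').resolve_left (one_sub_pow_succ_ne_zero hp k)

lemma qProd_mul_qProdInv (hp : ¬IsOfFinOrder p) : qProd p * qProdInv p = 1 := by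
  refine eq_one_of_rescale_eq_self hp ?_ (by simp [constantCoeff_qProd, constantCoeff_qProdInv])
  rw [map_mul, rescale_qProdInv hp]
  nth_rw 2 [qProd_eq_mul_rescale hp]
  ring

-- The factors `1 + p^i X` of `(-X; p)_∞` with even and with odd `i`.
lemma qProdInv_eq_mul_rescale (hp : ¬IsOfFinOrder p) :
    qProdInv p = qProdInv (p ^ 2) * rescale p (qProdInv (p ^ 2)) := by
  have hp2 : ¬IsOfFinOrder (p ^ 2) := by simpa [isOfFinOrder_pow] using hp
  set g := qProdInv (p ^ 2) * rescale p (qProdInv (p ^ 2)) with hg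
  have hg_rescale : rescale p g = (1 + X) * g := by
    rw [hg, map_mul, rescale_rescale, ← sq, rescale_qProdInv hp2]
    ring
  have h : qProd p * g = 1 := by
    refine eq_one_of_rescale_eq_self hp ?_ (by
      simp [hg, constantCoeff_qProd, constantCoeff_qProdInv, constantCoeff_rescale])
    rw [map_mul, hg_rescale]
    nth_rw 2 [qProd_eq_mul_rescale hp]
    ring
  calc qProdInv p = qProdInv p * (qProd p * g) := by rw [h, mul_one]
    _ = qProd p * qProdInv p * g := by ring
    _ = g := by rw [qProd_mul_qProdInv hp, one_mul]

-- The series is the polynomial `∏ i < k, (1 + c p^i X)`.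
lemma coeff_rescale_qProd_mul_qProdInv_eq_zero (hp : ¬IsOfFinOrder p) (c : K) {k n : ℕ}
    (hkn : k < n) : coeff n (rescale c (qProd p) * rescale (c * p ^ k) (qProdInv p)) = 0 := by
  induction k generalizing n with
  | zero => simp [← map_mul, qProd_mul_qProdInv hp, coeff_one, hkn.ne']
  | succ k ih =>
    obtain ⟨n, rfl⟩ := Nat.exists_eq_succ_of_ne_zero (Nat.ne_zero_of_lt hkn)
    have hstep : rescale c (qProd p) * rescale (c * p ^ (k + 1)) (qProdInv p) =
        (1 + C (c * p ^ k) * X) *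
          (rescale c (qProd p) * rescale (c * p ^ k) (qProdInv p)) := by
      rw [show c * p ^ (k + 1) = p * (c * p ^ k) by ring, ← rescale_rescale, rescale_qProdInv hp,
        map_mul, map_add, map_one, rescale_X]
      ring
    rw [hstep, add_mul, one_mul, map_add, mul_assoc, coeff_C_mul, coeff_succ_X_mul,
      ih (by omega), ih (by omega), mul_zero, add_zero]

lemma neg_one_pow_mul_coeff_qProd (p : K) (k : ℕ) :
    (-1) ^ k * coeff k (qProd p) = p ^ k.choose 2 * coeff k (qProdInv p) := by
  simp only [qProd, qProdInv, coeff_mk]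
  ring

end EulerProduct

section QuantumBinomial

variable {v : K}

/-- The quantum integer `[n]` in base `v`, over an arbitrary field. -/
def quantumInt (v : K) (n : ℤ) : K := (v ^ n - v ^ (-n)) / (v - v⁻¹)

/-- The quantum binomial coefficient with integral upper and natural lower argument in base `v`,
over an arbitrary field. -/
def quantumBinom (v : K) (m : ℤ) (k : ℕ) : K :=
  (∏ i ∈ range k, quantumInt v (m - i)) / ∏ i ∈ range k, quantumInt v (i + 1)

/-- The generating series `∑ k, [m, k] X^k` of the quantum binomial coefficients. -/
def quantumBinomSeries (v : K) (m : ℤ) : K⟦X⟧ := mk (quantumBinom v m)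

lemma not_isOfFinOrder_zpow (hv : ¬IsOfFinOrder v) {d : ℤ} (hd : d ≠ 0) :
    ¬IsOfFinOrder (v ^ d) := by
  rw [isOfFinOrder_iff_zpow_eq_one] at hv ⊢
  rintro ⟨n, hn, h⟩
  exact hv ⟨d * n, mul_ne_zero hd hn, by rw [zpow_mul, h]⟩

lemma rescale_zpow_rescale_zpow (hv₀ : v ≠ 0) (a b : ℤ) (f : K⟦X⟧) :
    rescale (v ^ a) (rescale (v ^ b) f) = rescale (v ^ (a + b)) f := by
  rw [rescale_rescale, zpow_add₀ hv₀, mul_comm]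

lemma coeff_rescale_zpow (v : K) (a : ℤ) (n : ℕ) (f : K⟦X⟧) :
    coeff n (rescale (v ^ a) f) = v ^ (a * n) * coeff n f := by
  rw [coeff_rescale, zpow_mul, zpow_natCast]

lemma sub_inv_ne_zero_of_not_isOfFinOrder (hv₀ : v ≠ 0) (hv : ¬IsOfFinOrder v) :
    v - v⁻¹ ≠ 0 := by
  intro h
  refine hv (isOfFinOrder_iff_pow_eq_one.2 ⟨2, two_pos, ?_⟩)
  field_simp at h
  linear_combination h

lemma constantCoeff_quantumBinomSeries (v : K) (m : ℤ) :
    constantCoeff (quantumBinomSeries v m) = 1 := by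
  simp [quantumBinomSeries, quantumBinom, ← coeff_zero_eq_constantCoeff_apply]

lemma quantumBinom_natCast_eq_zero_of_lt (v : K) {n k : ℕ} (h : n < k) :
    quantumBinom v n k = 0 := by
  rw [quantumBinom, prod_eq_zero (mem_range.2 h) (by simp [quantumInt]), zero_div]

lemma zpow_mul_quantumInt (hv₀ : v ≠ 0) (hv : ¬IsOfFinOrder v) (a n : ℤ) :
    v ^ a * (v - v⁻¹) * quantumInt v n = v ^ (a + n) - v ^ (a - n) := by
  rw [quantumInt, mul_assoc, mul_div_cancel₀ _ (sub_inv_ne_zero_of_not_isOfFinOrder hv₀ hv),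
    mul_sub, ← zpow_add₀ hv₀, ← zpow_add₀ hv₀, ← sub_eq_add_neg]

lemma zpow_mul_quantumInt_natCast_succ (hv₀ : v ≠ 0) (hv : ¬IsOfFinOrder v) (k : ℕ) :
    v ^ (-(k + 1) : ℤ) * (v - v⁻¹) * quantumInt v (k + 1) = 1 - (v ^ (-2 : ℤ)) ^ (k + 1) := by
  rw [zpow_mul_quantumInt hv₀ hv, neg_add_cancel, zpow_zero, ← zpow_natCast, ← zpow_mul]
  push_cast
  ring_nf

lemma quantumInt_natCast_succ_ne_zero (hv₀ : v ≠ 0) (hv : ¬IsOfFinOrder v) (k : ℕ) :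
    quantumInt v (k + 1) ≠ 0 := by
  refine right_ne_zero_of_mul (a := v ^ (-(k + 1) : ℤ) * (v - v⁻¹)) ?_
  rw [zpow_mul_quantumInt_natCast_succ hv₀ hv]
  exact one_sub_pow_succ_ne_zero (not_isOfFinOrder_zpow hv (by norm_num)) k

lemma quantumBinom_succ_mul_quantumInt (hv₀ : v ≠ 0) (hv : ¬IsOfFinOrder v) (m : ℤ) (k : ℕ) :
    quantumBinom v m (k + 1) * quantumInt v (k + 1) =
      quantumBinom v m k * quantumInt v (m - k) := by
  simp only [quantumBinom, prod_range_succ]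
  have := quantumInt_natCast_succ_ne_zero hv₀ hv k
  have : ∏ i ∈ range k, quantumInt v (i + 1) ≠ 0 :=
    prod_ne_zero_iff.2 fun i _ => quantumInt_natCast_succ_ne_zero hv₀ hv i
  field_simp

lemma quantumBinom_succ_mul (hv₀ : v ≠ 0) (hv : ¬IsOfFinOrder v) (m : ℤ) (k : ℕ) :
    quantumBinom v m (k + 1) * (1 - (v ^ (-2 : ℤ)) ^ (k + 1)) =
      quantumBinom v m k * (v ^ (m - 1) * (v ^ (-2 : ℤ)) ^ k - v ^ (-m - 1)) := by
  have hfactor : v ^ (-(k + 1) : ℤ) * (v - v⁻¹) * quantumInt v (m - k) =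
      v ^ (m - 1) * (v ^ (-2 : ℤ)) ^ k - v ^ (-m - 1) := by
    rw [zpow_mul_quantumInt hv₀ hv, ← zpow_natCast, ← zpow_mul, ← zpow_add₀ hv₀]
    ring_nf
  rw [← zpow_mul_quantumInt_natCast_succ hv₀ hv, ← hfactor]
  linear_combination
    v ^ (-(k + 1) : ℤ) * (v - v⁻¹) * quantumBinom_succ_mul_quantumInt hv₀ hv m k

lemma rescale_quantumBinomSeries (hv₀ : v ≠ 0) (hv : ¬IsOfFinOrder v) (m : ℤ) :
    rescale (v ^ (m - 1)) (1 + X) * rescale (v ^ (-2 : ℤ)) (quantumBinomSeries v m) =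
      rescale (v ^ (-m - 1)) (1 + X) * quantumBinomSeries v m := by
  ext n
  simp only [map_add, map_one, rescale_X, add_mul, one_mul, mul_assoc, coeff_C_mul, coeff_rescale]
  cases n with
  | zero => simp
  | succ k =>
    simp only [coeff_succ_X_mul, coeff_rescale, quantumBinomSeries, coeff_mk]
    linear_combination -quantumBinom_succ_mul hv₀ hv m k

lemma quantumBinomSeries_eq_qProd_mul_qProdInv (hv₀ : v ≠ 0) (hv : ¬IsOfFinOrder v) (m : ℤ) :
    quantumBinomSeries v m = rescale (v ^ (m - 1)) (qProd (v ^ (-2 : ℤ))) *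
      rescale (v ^ (-m - 1)) (qProdInv (v ^ (-2 : ℤ))) := by
  have hp := not_isOfFinOrder_zpow hv (d := -2) (by norm_num)
  set p := v ^ (-2 : ℤ)
  have hinv (a : ℤ) : rescale (v ^ a) (qProd p) * rescale (v ^ a) (qProdInv p) = 1 := by
    rw [← map_mul, qProd_mul_qProdInv hp, map_one]
  have hprod (a : ℤ) : rescale (v ^ a) (qProd p) =
      rescale (v ^ a) (1 + X) * rescale p (rescale (v ^ a) (qProd p)) := by
    conv_lhs => rw [qProd_eq_mul_rescale hp, map_mul]
    rw [rescale_rescale, rescale_rescale, mul_comm p]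
  have hprodInv (a : ℤ) : rescale p (rescale (v ^ a) (qProdInv p)) =
      rescale (v ^ a) (1 + X) * rescale (v ^ a) (qProdInv p) := by
    rw [← map_mul, ← rescale_qProdInv hp, rescale_rescale, rescale_rescale, mul_comm p]
  have hone : quantumBinomSeries v m * rescale (v ^ (-m - 1)) (qProd p) *
      rescale (v ^ (m - 1)) (qProdInv p) = 1 := by
    refine eq_one_of_rescale_eq_self hp ?_ ?_
    · simp only [map_mul, hprodInv]
      linear_combination
        (rescale p (rescale (v ^ (-m - 1)) (qProd p)) * rescale (v ^ (m - 1)) (qProdInv p)) *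
          rescale_quantumBinomSeries hv₀ hv m -
        (quantumBinomSeries v m * rescale (v ^ (m - 1)) (qProdInv p)) * hprod (-m - 1)
    · simp [constantCoeff_rescale, constantCoeff_qProd, constantCoeff_qProdInv,
        constantCoeff_quantumBinomSeries]
  linear_combination
    (rescale (v ^ (m - 1)) (qProd p) * rescale (v ^ (-m - 1)) (qProdInv p)) * hone -
    quantumBinomSeries v m * (hinv (-m - 1) * rescale (v ^ (m - 1)) (qProd p) *
      rescale (v ^ (m - 1)) (qProdInv p) + hinv (m - 1))

lemma sum_range_quantumBinom_mul_neg_pow (hv₀ : v ≠ 0) (hv : ¬IsOfFinOrder v) (m : ℤ) (k : ℕ) :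
    (v ^ (-2 * m) - 1) * ∑ t ∈ range k, quantumBinom v m t * (-v ^ (1 - m)) ^ t =
      quantumBinom v m k * (-v ^ (1 - m)) ^ k * (1 - (v ^ (-2 : ℤ)) ^ k) := by
  induction k with
  | zero => simp
  | succ k ih =>
    have h₁ : v ^ (1 - m) * v ^ (m - 1) = 1 := by
      rw [← zpow_add₀ hv₀, sub_add_sub_cancel, sub_self, zpow_zero]
    have h₂ : v ^ (1 - m) * v ^ (-m - 1) = v ^ (-2 * m) := by
      rw [← zpow_add₀ hv₀]
      ring_nf
    rw [sum_range_succ, mul_add, ih, pow_succ]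
    linear_combination
      (-v ^ (1 - m)) ^ k * (v ^ (1 - m) * quantumBinom_succ_mul hv₀ hv m k +
        quantumBinom v m k * ((v ^ (-2 : ℤ)) ^ k * h₁ - h₂))

lemma sum_range_quantumBinom_mul_neg_pow_eq_zero (hv₀ : v ≠ 0) (hv : ¬IsOfFinOrder v) {l : ℕ}
    (hl : 0 < l) : ∑ t ∈ range (l + 1), quantumBinom v l t * (-v ^ (1 - l : ℤ)) ^ t = 0 := by
  have h := sum_range_quantumBinom_mul_neg_pow hv₀ hv l (l + 1)
  rw [quantumBinom_natCast_eq_zero_of_lt v l.lt_succ_self, zero_mul, zero_mul] at h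
  refine (mul_eq_zero.1 h).resolve_left fun h₀ => hv ?_
  exact isOfFinOrder_iff_zpow_eq_one.2 ⟨-2 * l, by omega, sub_eq_zero.1 h₀⟩

end QuantumBinomial

section Convolution

variable {v : K}

lemma neg_two_zpow_pow_choose_two (v : K) (k : ℕ) :
    (v ^ (-2 : ℤ)) ^ k.choose 2 = v ^ (k * (1 - k) : ℤ) := by
  rw [← zpow_natCast, ← zpow_mul]
  congr 1
  induction k with
  | zero => simp
  | succ k ih =>
    rw [Nat.choose_succ_succ', Nat.choose_one_right]
    push_cast
    linear_combination ih

lemma neg_one_pow_mul_coeff_qProd_zpow_neg_two (v : K) (k : ℕ) :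
    (-1) ^ k * coeff k (qProd (v ^ (-2 : ℤ))) =
      v ^ (k * (1 - k) : ℤ) * coeff k (qProdInv (v ^ (-2 : ℤ))) := by
  rw [neg_one_pow_mul_coeff_qProd, neg_two_zpow_pow_choose_two]

lemma neg_one_pow_mul_coeff_qProdInv_zpow_neg_two (hv₀ : v ≠ 0) (k : ℕ) :
    (-1) ^ k * coeff k (qProdInv (v ^ (-2 : ℤ))) =
      v ^ (k * (k - 1) : ℤ) * coeff k (qProd (v ^ (-2 : ℤ))) := by
  have hsign : ((-1) ^ k * (-1) ^ k : K) = 1 := by rw [← mul_pow]; simp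
  have hpow : v ^ (k * (k - 1) : ℤ) * v ^ (k * (1 - k) : ℤ) = 1 := by
    rw [← zpow_add₀ hv₀, ← mul_add]
    simp
  linear_combination v ^ (k * (k - 1) : ℤ) *
      ((-1) ^ k * -neg_one_pow_mul_coeff_qProd_zpow_neg_two v k +
        coeff k (qProd (v ^ (-2 : ℤ))) * hsign) -
    (-1) ^ k * coeff k (qProdInv (v ^ (-2 : ℤ))) * hpow

lemma neg_one_pow_mul_quantumBinom (hv₀ : v ≠ 0) (hv : ¬IsOfFinOrder v) (m : ℤ) (r : ℕ) :
    (-1) ^ r * quantumBinom v m r = ∑ y ∈ antidiagonal r,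
      v ^ (m * (y.1 - y.2) - y.1 ^ 2 + y.2 ^ 2 - 2 * y.2 : ℤ) *
        (coeff y.1 (qProdInv (v ^ (-2 : ℤ))) * coeff y.2 (qProd (v ^ (-2 : ℤ)))) := by
  have h := congrArg (coeff r) (quantumBinomSeries_eq_qProd_mul_qProdInv hv₀ hv m)
  rw [quantumBinomSeries, coeff_mk, coeff_mul] at h
  rw [h, mul_sum]
  refine sum_congr rfl fun ⟨k, j⟩ hkj => ?_
  obtain rfl := HasAntidiagonal.mem_antidiagonal.1 hkj
  have hexp : v ^ (m * (k - j) - k ^ 2 + j ^ 2 - 2 * j : ℤ) = v ^ ((m - 1) * k) *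
      v ^ ((-m - 1) * j) * v ^ (k * (1 - k) : ℤ) * v ^ (j * (j - 1) : ℤ) := by
    simp only [← zpow_add₀ hv₀]
    ring_nf
  simp only [coeff_rescale_zpow, hexp, pow_add]
  linear_combination v ^ ((m - 1) * k) * v ^ ((-m - 1) * j) *
    ((-1) ^ j * coeff j (qProdInv (v ^ (-2 : ℤ))) *
      neg_one_pow_mul_coeff_qProd_zpow_neg_two v k +
    v ^ (k * (1 - k) : ℤ) * coeff k (qProdInv (v ^ (-2 : ℤ))) *
      neg_one_pow_mul_coeff_qProdInv_zpow_neg_two hv₀ j)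

-- With all four factors expanded, the only power of `v` coupling `(i, k)` to `(j, m)` is
-- `v ^ (k * j - m * i)`; on the antidiagonals `i + k = I`, `j + m = J` it is the separated
-- `v ^ (k * J - m * I)`.
lemma sum_twisted_coeff_mul_quantumBinom (hv₀ : v ≠ 0) (hv : ¬IsOfFinOrder v) (f g : K⟦X⟧)
    (N l : ℤ) (u : ℕ) :
    ∑ z ∈ antidiagonal u,
        coeff z.1 (rescale (v ^ (N - z.2)) f * rescale (v ^ (-(N - z.2))) g) *
          ((-1) ^ z.2 * quantumBinom v (N - l) z.2) =
      ∑ z ∈ antidiagonal u, v ^ (N * (z.1 - z.2)) *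
        (coeff z.1 (f * rescale (v ^ (z.2 - z.1 - l : ℤ)) (qProdInv (v ^ (-2 : ℤ)))) *
          coeff z.2 (g * rescale (v ^ (z.2 - z.1 + l - 2 : ℤ)) (qProd (v ^ (-2 : ℤ))))) := by
  set P := qProd (v ^ (-2 : ℤ))
  set E := qProdInv (v ^ (-2 : ℤ))
  let summand (i j k m : ℕ) : K := v ^ (N * (i + k - j - m) + (j + m - i - k - l) * k +
    (j + m - i - k + l - 2) * m) * (coeff i f * coeff j g * (coeff k E * coeff m P))
  calc
    _ = ∑ z ∈ antidiagonal u, ∑ x ∈ antidiagonal z.1, ∑ y ∈ antidiagonal z.2,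
        summand x.1 x.2 y.1 y.2 := by
      refine sum_congr rfl fun ⟨s, r⟩ _ => ?_
      rw [neg_one_pow_mul_quantumBinom hv₀ hv, coeff_mul, sum_mul_sum]
      refine sum_congr rfl fun x _ => sum_congr rfl fun ⟨k, m⟩ hy => ?_
      obtain rfl := HasAntidiagonal.mem_antidiagonal.1 hy
      have hexp : v ^ (N * (x.1 + k - x.2 - m) + (x.2 + m - x.1 - k - l) * k +
          (x.2 + m - x.1 - k + l - 2) * m) = v ^ ((N - (k + m : ℕ)) * x.1) *
          v ^ (-(N - (k + m : ℕ)) * x.2) *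
          v ^ ((N - l) * (k - m) - k ^ 2 + m ^ 2 - 2 * m) := by
        rw [← zpow_add₀ hv₀, ← zpow_add₀ hv₀]
        push_cast
        ring_nf
      simp only [summand, coeff_rescale_zpow, hexp]
      ring
    _ = ∑ z ∈ antidiagonal u, ∑ x ∈ antidiagonal z.1, ∑ y ∈ antidiagonal z.2,
        summand x.1 y.1 x.2 y.2 := sum_antidiagonal_antidiagonal_comm u summand
    _ = _ := by
      refine sum_congr rfl fun ⟨I, J⟩ _ => ?_
      rw [coeff_mul, coeff_mul, sum_mul_sum, mul_sum]
      simp only [mul_sum]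
      refine sum_congr rfl fun ⟨i, k⟩ hx => sum_congr rfl fun ⟨j, m⟩ hy => ?_
      obtain rfl := HasAntidiagonal.mem_antidiagonal.1 hx
      obtain rfl := HasAntidiagonal.mem_antidiagonal.1 hy
      have hexp : v ^ (N * (i + k - j - m) + (j + m - i - k - l) * k +
          (j + m - i - k + l - 2) * m) = v ^ (N * ((i + k : ℕ) - (j + m : ℕ))) *
          v ^ (((j + m : ℕ) - (i + k : ℕ) - l) * k) *
          v ^ (((j + m : ℕ) - (i + k : ℕ) + l - 2) * m) := by
        rw [← zpow_add₀ hv₀, ← zpow_add₀ hv₀]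
        push_cast
        ring_nf
      simp only [summand, coeff_rescale_zpow, hexp]
      ring

end Convolution

section ParityMerging

variable {v : K}

/-- The part of the summand of `T(w, u, ℓ)` that depends on the parity of `n = w + t - r`, with the
sign with which that parity enters `T`. -/
def parityTerm (v : K) (u ℓ : ℕ) (n : ℤ) (c e : ℕ) : K :=
  if Even n then
    v ^ ((ℓ + u) * (c - e) : ℤ) *
      (quantumBinom (v ^ 2) (u - 1 + n / 2) c * quantumBinom (v ^ 2) (n / 2 - ℓ) e)
  else
    -(v ^ ((ℓ + u - 1) * (c - e) : ℤ) *
      (quantumBinom (v ^ 2) (u + (n - 1) / 2) c * quantumBinom (v ^ 2) ((n - 1) / 2 - ℓ) e))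

/-- The product of the two infinite products in the numerator of the generating series
`∑ c e, parityTerm v u ℓ 0 c e * X ^ (c + e)`; general `n` only rescales `X` in it by `v ^ n`. -/
def numeratorSeries (v : K) (u ℓ : ℕ) : K⟦X⟧ :=
  rescale (v ^ (3 * u + ℓ - 4 : ℤ)) (qProd (v ^ (-4 : ℤ))) *
    rescale (v ^ (-3 * ℓ - u - 2 : ℤ)) (qProd (v ^ (-4 : ℤ)))

lemma rescale_quantumBinomSeries_sq (hv₀ : v ≠ 0) (hv : ¬IsOfFinOrder v) (a m : ℤ) :
    rescale (v ^ a) (quantumBinomSeries (v ^ 2) m) =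
      rescale (v ^ (a + 2 * m - 2)) (qProd (v ^ (-4 : ℤ))) *
        rescale (v ^ (a - 2 * m - 2)) (qProdInv (v ^ (-4 : ℤ))) := by
  have hv2 : ¬IsOfFinOrder (v ^ 2) := by simpa [isOfFinOrder_pow] using hv
  have hsq (b : ℤ) : (v ^ 2) ^ b = v ^ (2 * b) := by rw [← zpow_natCast, ← zpow_mul, Nat.cast_two]
  rw [quantumBinomSeries_eq_qProd_mul_qProdInv (pow_ne_zero 2 hv₀) hv2, map_mul, hsq (m - 1),
    hsq (-m - 1), hsq (-2), show (2 * -2 : ℤ) = -4 by rfl, rescale_zpow_rescale_zpow hv₀,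
    rescale_zpow_rescale_zpow hv₀]
  ring_nf

lemma rescale_qProdInv_zpow_neg_two (hv₀ : v ≠ 0) (hv : ¬IsOfFinOrder v) (a : ℤ) :
    rescale (v ^ a) (qProdInv (v ^ (-2 : ℤ))) =
      rescale (v ^ a) (qProdInv (v ^ (-4 : ℤ))) *
        rescale (v ^ (a - 2)) (qProdInv (v ^ (-4 : ℤ))) := by
  have hsq : (v ^ (-2 : ℤ)) ^ 2 = v ^ (-4 : ℤ) := by
    rw [← zpow_natCast, ← zpow_mul]
    rfl
  rw [qProdInv_eq_mul_rescale (not_isOfFinOrder_zpow hv (by norm_num)), map_mul, hsq,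
    rescale_zpow_rescale_zpow hv₀, ← sub_eq_add_neg]

lemma sum_zpow_mul_quantumBinom_mul_quantumBinom (hv₀ : v ≠ 0) (b : K) (a m₁ m₂ : ℤ) (s : ℕ) :
    ∑ x ∈ antidiagonal s,
        v ^ (a * (x.1 - x.2)) * (quantumBinom b m₁ x.1 * quantumBinom b m₂ x.2) =
      coeff s (rescale (v ^ a) (quantumBinomSeries b m₁) *
        rescale (v ^ (-a)) (quantumBinomSeries b m₂)) := by
  rw [coeff_mul]
  refine sum_congr rfl fun x _ => ?_
  rw [coeff_rescale_zpow, coeff_rescale_zpow, quantumBinomSeries, quantumBinomSeries, coeff_mk,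
    coeff_mk, mul_mul_mul_comm, ← zpow_add₀ hv₀]
  ring_nf

lemma sum_parityTerm (hv₀ : v ≠ 0) (hv : ¬IsOfFinOrder v) (u ℓ : ℕ) (n : ℤ) (s : ℕ) :
    ∑ x ∈ antidiagonal s, parityTerm v u ℓ n x.1 x.2 =
      (-1) ^ n * coeff s (rescale (v ^ n) (numeratorSeries v u ℓ) *
        rescale (v ^ (-n)) (rescale (v ^ (ℓ - u : ℤ)) (qProdInv (v ^ (-2 : ℤ))))) := by
  simp only [numeratorSeries, map_mul, rescale_zpow_rescale_zpow hv₀,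
    rescale_qProdInv_zpow_neg_two hv₀ hv]
  obtain ⟨x, rfl | rfl⟩ := Int.even_or_odd' n
  · have heven : Even (2 * x) := even_two_mul x
    have hx : 2 * x / 2 = x := by omega
    simp only [parityTerm, if_pos heven, heven.neg_one_zpow, one_mul, hx,
      sum_zpow_mul_quantumBinom_mul_quantumBinom hv₀, rescale_quantumBinomSeries_sq hv₀ hv]
    ring_nf
  · have hodd : Odd (2 * x + 1) := odd_two_mul_add_one x
    have hx : (2 * x + 1 - 1) / 2 = x := by omega
    simp only [parityTerm, if_neg (Int.not_even_iff_odd.2 hodd), hodd.neg_one_zpow, neg_one_mul,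
      hx, sum_neg_distrib, sum_zpow_mul_quantumBinom_mul_quantumBinom hv₀,
      rescale_quantumBinomSeries_sq hv₀ hv]
    ring_nf

end ParityMerging

section Vanishing

variable {v : K}

/-- `T(w, u, ℓ)` with an element `v` of an arbitrary field in place of `q`. The index `z` runs
over the pairs `(c + e, r)` and `x` over the pairs `(c, e)`; the two parities of `w + t - r` are
merged in `parityTerm`. -/
def quantumT (v : K) (w : ℤ) (u ℓ : ℕ) : K :=
  ∑ t ∈ range (ℓ + 1), v ^ (-t * (ℓ + u - 1) : ℤ) * quantumBinom v ℓ t *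
    ∑ z ∈ antidiagonal u,
      (∑ x ∈ antidiagonal z.1, parityTerm v u ℓ (w + t - z.2) x.1 x.2) *
        quantumBinom v (w + t - ℓ) z.2

lemma sum_parityTerm_mul_quantumBinom (hv₀ : v ≠ 0) (hv : ¬IsOfFinOrder v) (N : ℤ) (u ℓ : ℕ) :
    ∑ z ∈ antidiagonal u, (∑ x ∈ antidiagonal z.1, parityTerm v u ℓ (N - z.2) x.1 x.2) *
        quantumBinom v (N - ℓ) z.2 =
      (-1) ^ N * ∑ z ∈ antidiagonal u, v ^ (N * (z.1 - z.2)) *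
        (coeff z.1 (numeratorSeries v u ℓ *
          rescale (v ^ (z.2 - z.1 - ℓ : ℤ)) (qProdInv (v ^ (-2 : ℤ)))) *
        coeff z.2 (rescale (v ^ (ℓ - u : ℤ)) (qProdInv (v ^ (-2 : ℤ))) *
          rescale (v ^ (z.2 - z.1 + ℓ - 2 : ℤ)) (qProd (v ^ (-2 : ℤ))))) := by
  rw [← sum_twisted_coeff_mul_quantumBinom hv₀ hv, mul_sum]
  refine sum_congr rfl fun z _ => ?_
  have hsign : (-1 : K) ^ (N - z.2) = (-1) ^ N * (-1) ^ z.2 := by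
    rw [zpow_sub₀ (by simp), zpow_natCast, div_eq_mul_inv, ← inv_pow, inv_neg_one]
  rw [sum_parityTerm hv₀ hv, hsign]
  ring

lemma quantumT_eq_sum (hv₀ : v ≠ 0) (hv : ¬IsOfFinOrder v) (w : ℤ) (u ℓ : ℕ) :
    quantumT v w u ℓ = (-1) ^ w * ∑ z ∈ antidiagonal u, v ^ (w * (z.1 - z.2)) *
      (coeff z.1 (numeratorSeries v u ℓ *
          rescale (v ^ (z.2 - z.1 - ℓ : ℤ)) (qProdInv (v ^ (-2 : ℤ)))) *
        coeff z.2 (rescale (v ^ (ℓ - u : ℤ)) (qProdInv (v ^ (-2 : ℤ))) *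
          rescale (v ^ (z.2 - z.1 + ℓ - 2 : ℤ)) (qProd (v ^ (-2 : ℤ))))) *
      ∑ t ∈ range (ℓ + 1), quantumBinom v ℓ t * (-v ^ (1 - ℓ - 2 * z.2 : ℤ)) ^ t := by
  simp only [quantumT, sum_parityTerm_mul_quantumBinom hv₀ hv, mul_sum]
  rw [sum_comm]
  refine sum_congr rfl fun z hz => sum_congr rfl fun t _ => ?_
  have hsign : (-1 : K) ^ (w + t) = (-1) ^ w * (-1) ^ t := by
    rw [zpow_add₀ (by simp), zpow_natCast]
  have hexp : v ^ (-t * (ℓ + u - 1) : ℤ) * v ^ ((w + t) * (z.1 - z.2) : ℤ) =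
      v ^ (w * (z.1 - z.2)) * (v ^ (1 - ℓ - 2 * z.2 : ℤ)) ^ t := by
    rw [← HasAntidiagonal.mem_antidiagonal.1 hz, ← zpow_natCast, ← zpow_mul, ← zpow_add₀ hv₀,
      ← zpow_add₀ hv₀]
    push_cast
    ring_nf
  rw [hsign, neg_pow (v ^ (1 - ℓ - 2 * z.2 : ℤ))]
  generalize coeff (R := K) z.1 _ * coeff (R := K) z.2 _ = c
  linear_combination (quantumBinom v ℓ t * (-1) ^ w * (-1) ^ t * c) * hexp

lemma coeff_rescale_zpow_qProd_mul_qProdInv_eq_zero (hv₀ : v ≠ 0) {d : ℤ}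
    (hd : ¬IsOfFinOrder (v ^ d)) (a : ℤ) {n : ℕ} (hn : 0 < n) :
    coeff n (rescale (v ^ a) (qProd (v ^ d)) *
      rescale (v ^ (a + d * (n - 1))) (qProdInv (v ^ d))) = 0 := by
  obtain ⟨k, rfl⟩ := Nat.exists_eq_succ_of_ne_zero hn.ne'
  have hexp : v ^ (a + d * ((k + 1 : ℕ) - 1)) = v ^ a * (v ^ d) ^ k := by
    rw [zpow_add₀ hv₀, zpow_mul, Nat.cast_succ, add_sub_cancel_right, zpow_natCast]
  rw [hexp]
  exact coeff_rescale_qProd_mul_qProdInv_eq_zero hd _ k.lt_succ_self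

lemma coeff_numeratorSeries_zero_mul_qProdInv_eq_zero (hv₀ : v ≠ 0) (hv : ¬IsOfFinOrder v)
    {u : ℕ} (hu : 0 < u) :
    coeff u (numeratorSeries v u 0 * rescale (v ^ (-u : ℤ)) (qProdInv (v ^ (-2 : ℤ)))) = 0 := by
  have hv4 : ¬IsOfFinOrder (v ^ (-4 : ℤ)) := not_isOfFinOrder_zpow hv (by norm_num)
  have hcancel : rescale (v ^ (-u - 2 : ℤ)) (qProd (v ^ (-4 : ℤ))) *
      rescale (v ^ (-u - 2 : ℤ)) (qProdInv (v ^ (-4 : ℤ))) = 1 := by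
    rw [← map_mul, qProd_mul_qProdInv hv4, map_one]
  have hzero := coeff_rescale_zpow_qProd_mul_qProdInv_eq_zero hv₀ hv4 (3 * u - 4) hu
  rw [show (3 * u - 4 + -4 * (u - 1) : ℤ) = -u by ring] at hzero
  rw [← hzero, rescale_qProdInv_zpow_neg_two hv₀ hv, numeratorSeries]
  simp only [Nat.cast_zero, add_zero, mul_zero, zero_sub]
  congr 1
  linear_combination rescale (v ^ (3 * u - 4 : ℤ)) (qProd (v ^ (-4 : ℤ))) *
    rescale (v ^ (-u : ℤ)) (qProdInv (v ^ (-4 : ℤ))) * hcancel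

theorem T_eq_zero_general (hv₀ : v ≠ 0) (hv : ¬IsOfFinOrder v) (w : ℤ) (u ℓ : ℕ)
    (h : ¬(u = 0 ∧ ℓ = 0)) : quantumT v w u ℓ = 0 := by
  rw [quantumT_eq_sum hv₀ hv]
  refine mul_eq_zero_of_right _ (sum_eq_zero fun ⟨I, J⟩ hIJ => ?_)
  obtain rfl := HasAntidiagonal.mem_antidiagonal.1 hIJ
  obtain hJ | rfl := (Nat.zero_le J).lt_or_eq'
  · have hcoeff := coeff_rescale_zpow_qProd_mul_qProdInv_eq_zero hv₀
      (not_isOfFinOrder_zpow hv (by norm_num : (-2 : ℤ) ≠ 0)) (J - I + ℓ - 2) hJ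
    rw [mul_comm, show (J - I + ℓ - 2 + -2 * (J - 1) : ℤ) = ℓ - (I + J : ℕ) by push_cast; ring]
      at hcoeff
    simp only [hcoeff, mul_zero, zero_mul]
  obtain hℓ | rfl := (Nat.zero_le ℓ).lt_or_eq'
  · simp [sum_range_quantumBinom_mul_neg_pow_eq_zero hv₀ hv hℓ]
  · have hcoeff := coeff_numeratorSeries_zero_mul_qProdInv_eq_zero hv₀ hv (u := I) (by omega)
    simp only [add_zero, Nat.cast_zero, zero_sub, sub_zero, hcoeff, zero_mul, mul_zero]

end Vanishing

lemma qbinom_natCast (v : F) (n : ℤ) (c : ℕ) : qbinom v n c = quantumBinom v n c := by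
  simp [qbinom, quantumBinom, qfact, qint, quantumInt]

lemma qq_ne_zero : qq ≠ 0 := RatFunc.X_ne_zero

lemma T_eq_quantumT (w : ℤ) (u ℓ : ℕ) : T w u ℓ = quantumT qq w u ℓ := by
  let summand (c e r t : ℕ) : F := qq ^ (-t * (ℓ + u - 1) : ℤ) * quantumBinom qq ℓ t *
    (parityTerm qq u ℓ (w + t - r) c e * quantumBinom qq (w + t - ℓ) r)
  calc
    T w u ℓ = ∑ c ∈ range (u + 1), ∑ e ∈ range (u + 1 - c), ∑ t ∈ range (ℓ + 1),
        summand c e (u - c - e) t := by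
      simp only [T, ← sum_sub_distrib, qbinom_natCast, add_comm _ w]
      refine sum_congr rfl fun c _ => sum_congr rfl fun e _ => sum_congr rfl fun t _ => ?_
      by_cases hn : Even (w + t - (u - c - e : ℕ)) <;>
        simp only [summand, parityTerm, hn, not_true_eq_false, not_false_eq_true, if_true, if_false,
          zpow_add₀ qq_ne_zero] <;>
        ring
    _ = ∑ z ∈ antidiagonal u, ∑ x ∈ antidiagonal z.1, ∑ t ∈ range (ℓ + 1),
        summand x.1 x.2 z.2 t :=
      sum_range_sum_range_eq_sum_antidiagonal u fun c e r => ∑ t ∈ range (ℓ + 1), summand c e r t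
    _ = quantumT qq w u ℓ := by
      simp only [quantumT, summand, mul_sum, sum_mul]
      simp only [sum_comm (t := range (ℓ + 1))]

lemma not_isOfFinOrder_ratFuncX : ¬IsOfFinOrder (RatFunc.X : RatFunc K) := by
  rw [isOfFinOrder_iff_pow_eq_one]
  rintro ⟨n, hn, hX⟩
  refine RatFunc.transcendental_X (K := K) (.of_pow hn ?_)
  rw [hX]
  exact isAlgebraic_one

/-- For every integer `w` and all nonnegative integers `u, ℓ` not both zero, `T(w,u,ℓ) = 0`. -/
theorem T_eq_zero (w : ℤ) (u ℓ : ℕ) (h : ¬ (u = 0 ∧ ℓ = 0)) : T w u ℓ = 0 := by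
  rw [T_eq_quantumT]
  exact T_eq_zero_general qq_ne_zero not_isOfFinOrder_ratFuncX w u ℓ h

end
end

section
/- For all integers w, p0, p1, p2 and all nonnegative integers u, ℓ, one has G(w+1,u,ℓ;p0,p1,p2) = q^{−2u} G(w,u,ℓ;p0+1,p2,p1+1). -/
open Finset

noncomputable section

/-- The function `G(w,u,ℓ;p0,p1,p2)` of [CLW, (5.1)]. -/
noncomputable def G (w : ℤ) (u ℓ : ℕ) (p0 p1 p2 : ℤ) : F :=
  (-1 : F) ^ w * qq ^ ((u : ℤ) ^ 2 - w * (u : ℤ) + (ℓ : ℤ) * (u : ℤ)) *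
  ((∑ c ∈ range (u + 1), ∑ e ∈ range (u + 1 - c), ∑ t ∈ range (ℓ + 1),
      (let r : ℕ := u - c - e;
       if Even ((t : ℤ) + w - (r : ℤ)) then
         qq ^ (-(t : ℤ) * ((ℓ : ℤ) + (u : ℤ) - 1) - (u : ℤ) * ((c : ℤ) + (e : ℤ)) + 2 * (c : ℤ)
               + (r : ℤ) * p0 + 2 * (c : ℤ) * p1 + 2 * (e : ℤ) * p2)
           * qbinom qq (ℓ : ℤ) (t : ℤ) * qbinom qq (w + (t : ℤ) + p0) (r : ℤ)
           * qbinom (qq ^ 2) ((w + (t : ℤ) - (r : ℤ)) / 2 + p1) (c : ℤ)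
           * qbinom (qq ^ 2) ((w + (t : ℤ) - (r : ℤ)) / 2 + p2) (e : ℤ)
       else 0))
  - (∑ c ∈ range (u + 1), ∑ e ∈ range (u + 1 - c), ∑ t ∈ range (ℓ + 1),
      (let r : ℕ := u - c - e;
       if ¬ Even ((t : ℤ) + w - (r : ℤ)) then
         qq ^ (-(t : ℤ) * ((ℓ : ℤ) + (u : ℤ) - 1) - ((u : ℤ) - 1) * ((c : ℤ) + (e : ℤ))
               + (r : ℤ) * p0 + 2 * (c : ℤ) * p1 + 2 * (e : ℤ) * p2)
           * qbinom qq (ℓ : ℤ) (t : ℤ) * qbinom qq (w + (t : ℤ) + p0) (r : ℤ)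
           * qbinom (qq ^ 2) (1 + (w + (t : ℤ) - (r : ℤ) - 1) / 2 + p1) (c : ℤ)
           * qbinom (qq ^ 2) ((w + (t : ℤ) - (r : ℤ) - 1) / 2 + p2) (e : ℤ)
       else 0)))

/-!
Replacing `w` by `w + 1` flips every parity condition, so the even sum at `w + 1` runs over the
same indices as the odd sum at `w`, and vice versa. After the shift the two base-`q²` binomials of
one sum are those of the other with the roles of `c` and `e` exchanged; this explains why `p1` and
`p2` trade places, and why one of them picks up a `1`. Each summand contributes the factor
`q^{-(c+e+r)} = q^{-u}`, the prefactor contributes `-q^{-u}`, and its sign absorbs the exchange of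
the two sums.
-/

section TripleSum

variable {M : Type*}

/-- The sum of `f c e r` over all natural numbers with `c + e + r = u`. As in `G`, the index `r` is
eliminated as `u - c - e`; the subtraction never truncates on the ranges used. -/
def tripleSum [AddCommMonoid M] (u : ℕ) (f : ℕ → ℕ → ℕ → M) : M :=
  ∑ c ∈ range (u + 1), ∑ e ∈ range (u + 1 - c), f c e (u - c - e)

theorem tripleSum_congr [AddCommMonoid M] {u : ℕ} {f g : ℕ → ℕ → ℕ → M}
    (h : ∀ c e r, c + e + r = u → f c e r = g c e r) : tripleSum u f = tripleSum u g := by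
  refine sum_congr rfl fun c hc => sum_congr rfl fun e he => h _ _ _ ?_
  rw [mem_range] at hc he
  omega

theorem tripleSum_swap [AddCommMonoid M] (u : ℕ) (f : ℕ → ℕ → ℕ → M) :
    tripleSum u (fun c e r => f e c r) = tripleSum u f := by
  calc
    _ = ∑ e ∈ range (u + 1), ∑ c ∈ range (u + 1 - e), f e c (u - c - e) :=
      sum_comm' fun c e => by
        simp only [mem_range]
        omega
    _ = tripleSum u f := by simp only [tripleSum, Nat.sub_right_comm u]

theorem mul_tripleSum [NonUnitalNonAssocSemiring M] (a : M) (u : ℕ) (f : ℕ → ℕ → ℕ → M) :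
    a * tripleSum u f = tripleSum u fun c e r => a * f c e r := by
  simp only [tripleSum, mul_sum]

end TripleSum

theorem even_add_add_one_sub (t w r : ℤ) : Even (t + (w + 1) - r) ↔ ¬Even (t + w - r) := by
  rw [← Int.even_add_one]
  ring_nf

/-- The summand of the even part of `G`, without its parity condition. -/
def evenTerm (w u ℓ p0 p1 p2 c e r t : ℤ) : F :=
  qq ^ (-t * (ℓ + u - 1) - u * (c + e) + 2 * c + r * p0 + 2 * c * p1 + 2 * e * p2)
    * qbinom qq ℓ t * qbinom qq (w + t + p0) r
    * qbinom (qq ^ 2) ((w + t - r) / 2 + p1) c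
    * qbinom (qq ^ 2) ((w + t - r) / 2 + p2) e

/-- The summand of the odd part of `G`, without its parity condition. -/
def oddTerm (w u ℓ p0 p1 p2 c e r t : ℤ) : F :=
  qq ^ (-t * (ℓ + u - 1) - (u - 1) * (c + e) + r * p0 + 2 * c * p1 + 2 * e * p2)
    * qbinom qq ℓ t * qbinom qq (w + t + p0) r
    * qbinom (qq ^ 2) (1 + (w + t - r - 1) / 2 + p1) c
    * qbinom (qq ^ 2) ((w + t - r - 1) / 2 + p2) e

/-- The sum in `G` over the indices with `t + w - r` even. -/
def evenSum (w : ℤ) (u ℓ : ℕ) (p0 p1 p2 : ℤ) : F :=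
  tripleSum u fun c e r => ∑ t ∈ range (ℓ + 1),
    if Even ((t : ℤ) + w - r) then evenTerm w u ℓ p0 p1 p2 c e r t else 0

/-- The sum in `G` over the indices with `t + w - r` odd. -/
def oddSum (w : ℤ) (u ℓ : ℕ) (p0 p1 p2 : ℤ) : F :=
  tripleSum u fun c e r => ∑ t ∈ range (ℓ + 1),
    if ¬Even ((t : ℤ) + w - r) then oddTerm w u ℓ p0 p1 p2 c e r t else 0

/-- The factor `(-1)^w q^{u² - wu + ℓu}` in front of the two sums of `G`. -/
def prefactor (w u ℓ : ℤ) : F := (-1 : F) ^ w * qq ^ (u ^ 2 - w * u + ℓ * u)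

theorem G_eq (w : ℤ) (u ℓ : ℕ) (p0 p1 p2 : ℤ) :
    G w u ℓ p0 p1 p2
      = prefactor w u ℓ * (evenSum w u ℓ p0 p1 p2 - oddSum w u ℓ p0 p1 p2) :=
  rfl

theorem prefactor_add_one (w u ℓ : ℤ) :
    prefactor (w + 1) u ℓ = -qq ^ (-u) * prefactor w u ℓ := by
  have hpow : qq ^ (u ^ 2 - (w + 1) * u + ℓ * u)
      = qq ^ (-u) * qq ^ (u ^ 2 - w * u + ℓ * u) := by
    rw [← zpow_add₀ RatFunc.X_ne_zero]
    ring_nf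
  rw [prefactor, prefactor, hpow, zpow_add_one₀ (neg_ne_zero.mpr one_ne_zero)]
  ring

section Shift

variable (w p0 p1 p2 : ℤ)

theorem evenTerm_add_one (u ℓ c e r t : ℤ) :
    evenTerm (w + 1) u ℓ p0 p1 p2 c e r t
      = qq ^ (-(c + e + r)) * oddTerm w u ℓ (p0 + 1) p2 (p1 + 1) e c r t := by
  have hpow : qq ^ (-t * (ℓ + u - 1) - u * (c + e) + 2 * c + r * p0 + 2 * c * p1 + 2 * e * p2)
      = qq ^ (-(c + e + r)) * qq ^ (-t * (ℓ + u - 1) - (u - 1) * (e + c) + r * (p0 + 1)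
          + 2 * e * p2 + 2 * c * (p1 + 1)) := by
    rw [← zpow_add₀ RatFunc.X_ne_zero]
    ring_nf
  have hr : w + 1 + t + p0 = w + t + (p0 + 1) := by ring
  have hc : (w + 1 + t - r) / 2 + p1 = (w + t - r - 1) / 2 + (p1 + 1) := by omega
  have he : (w + 1 + t - r) / 2 + p2 = 1 + (w + t - r - 1) / 2 + p2 := by omega
  rw [evenTerm, oddTerm, hpow, hr, hc, he]
  ring

theorem oddTerm_add_one (u ℓ c e r t : ℤ) :
    oddTerm (w + 1) u ℓ p0 p1 p2 c e r t
      = qq ^ (-(c + e + r)) * evenTerm w u ℓ (p0 + 1) p2 (p1 + 1) e c r t := by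
  have hpow : qq ^ (-t * (ℓ + u - 1) - (u - 1) * (c + e) + r * p0 + 2 * c * p1 + 2 * e * p2)
      = qq ^ (-(c + e + r)) * qq ^ (-t * (ℓ + u - 1) - u * (e + c) + 2 * e + r * (p0 + 1)
          + 2 * e * p2 + 2 * c * (p1 + 1)) := by
    rw [← zpow_add₀ RatFunc.X_ne_zero]
    ring_nf
  have hr : w + 1 + t + p0 = w + t + (p0 + 1) := by ring
  have hc : 1 + (w + 1 + t - r - 1) / 2 + p1 = (w + t - r) / 2 + (p1 + 1) := by omega
  have he : (w + 1 + t - r - 1) / 2 + p2 = (w + t - r) / 2 + p2 := by omega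
  rw [oddTerm, evenTerm, hpow, hr, hc, he]
  ring

theorem evenSum_add_one (u ℓ : ℕ) :
    evenSum (w + 1) u ℓ p0 p1 p2
      = qq ^ (-(u : ℤ)) * oddSum w u ℓ (p0 + 1) p2 (p1 + 1) := by
  rw [evenSum, oddSum, ← tripleSum_swap, mul_tripleSum]
  refine tripleSum_congr fun c e r hu => ?_
  rw [mul_sum]
  refine sum_congr rfl fun t _ => ?_
  subst hu
  simp only [even_add_add_one_sub, evenTerm_add_one, mul_ite, mul_zero, Nat.cast_add,
    add_comm (e : ℤ)]

theorem oddSum_add_one (u ℓ : ℕ) :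
    oddSum (w + 1) u ℓ p0 p1 p2
      = qq ^ (-(u : ℤ)) * evenSum w u ℓ (p0 + 1) p2 (p1 + 1) := by
  rw [evenSum, oddSum, ← tripleSum_swap, mul_tripleSum]
  refine tripleSum_congr fun c e r hu => ?_
  rw [mul_sum]
  refine sum_congr rfl fun t _ => ?_
  subst hu
  simp only [even_add_add_one_sub, oddTerm_add_one, not_not, mul_ite, mul_zero, Nat.cast_add,
    add_comm (e : ℤ)]

end Shift

/-- `G(w+1,u,ℓ;p0,p1,p2) = q^{−2u} G(w,u,ℓ;p0+1,p2,p1+1)`. -/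
theorem G_odd_shift (w p0 p1 p2 : ℤ) (u ℓ : ℕ) :
    G (w + 1) u ℓ p0 p1 p2 = qq ^ (-2 * (u : ℤ)) * G w u ℓ (p0 + 1) p2 (p1 + 1) := by
  have hscale : qq ^ (-2 * (u : ℤ)) = qq ^ (-(u : ℤ)) * qq ^ (-(u : ℤ)) := by
    rw [← zpow_add₀ RatFunc.X_ne_zero]
    ring_nf
  rw [G_eq, G_eq, prefactor_add_one, evenSum_add_one, oddSum_add_one, hscale]
  ring

end
end
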